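/- arXiv:2502.00885 — 4 statements merged into one kernel-verified Lean document; each statement's English description precedes it below -/
import Mathlib

section
/- Let d ≥ 1, let S be a real symmetric d×d matrix, let γ ∈ ℝ, and let A be the 2d×2d block matrix A = [[0, −I], [S, γ·I]] (i.e., Matrix.fromBlocks 0 (−1) S (γ • 1)). Suppose v ∈ ℝ^d is a nonzero vector with S·v = κ·v for some κ ∈ ℝ. Then both μ₊(γ, κ) and μ₋(γ, κ) are eigenvalues of A·Aᵀ; that is, for each choice of sign there exists a nonzero w ∈ ℝ^{2d} with (A·Aᵀ)·w = μ_±(γ, κ)·w. -/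
open Matrix

/-- The larger eigenvalue of the 2×2 block of `A·Aᵀ`. -/
noncomputable def muPlus (γ κ : ℝ) : ℝ :=
  (γ ^ 2 + κ ^ 2 + 1 + Real.sqrt ((γ ^ 2 + κ ^ 2 + 1) ^ 2 - 4 * κ ^ 2)) / 2

/-- The smaller eigenvalue of the 2×2 block of `A·Aᵀ`. -/
noncomputable def muMinus (γ κ : ℝ) : ℝ :=
  (γ ^ 2 + κ ^ 2 + 1 - Real.sqrt ((γ ^ 2 + κ ^ 2 + 1) ^ 2 - 4 * κ ^ 2)) / 2

/-!
If the four blocks of a matrix act on `v` as the scalars `M i j`, the block matrix acts on the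
vectors `(a • v, b • v)` as the 2×2 matrix `M` acts on `(a, b)`, so every eigenvalue of `M` is an
eigenvalue of the block matrix. The blocks of `A·Aᵀ` are `1`, `-γ`, `-γ` and `γ² + S·Sᵀ`; hence it
is enough that `v` be a left singular vector of `S`. In that case `M` has trace `γ² + κ² + 1` and
determinant `κ²`, and `μ₊`, `μ₋` are the roots of its characteristic polynomial.
-/

section BlockEigenvectors

theorem sumElim_smul_ne_zero {n R : Type*} [Semiring R] [IsDomain R] {c : Fin 2 → R} (hc : c ≠ 0)
    {v : n → R} (hv : v ≠ 0) : Sum.elim (c 0 • v) (c 1 • v) ≠ 0 := by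
  intro h
  have h₀ : c 0 • v = 0 := congrArg (· ∘ Sum.inl) h
  have h₁ : c 1 • v = 0 := congrArg (· ∘ Sum.inr) h
  refine hc (funext (Fin.forall_fin_two.mpr ⟨?_, ?_⟩))
  · exact (smul_eq_zero.mp h₀).resolve_right hv
  · exact (smul_eq_zero.mp h₁).resolve_right hv

variable {n R : Type*} [Fintype n]

theorem fromBlocks_mulVec_sumElim_smul [CommSemiring R] {A B C D : Matrix n n R} {v : n → R}
    {M : Matrix (Fin 2) (Fin 2) R} (hA : A *ᵥ v = M 0 0 • v) (hB : B *ᵥ v = M 0 1 • v)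
    (hC : C *ᵥ v = M 1 0 • v) (hD : D *ᵥ v = M 1 1 • v) (c : Fin 2 → R) :
    fromBlocks A B C D *ᵥ Sum.elim (c 0 • v) (c 1 • v) =
      Sum.elim ((M *ᵥ c) 0 • v) ((M *ᵥ c) 1 • v) := by
  have hrow (i : Fin 2) : (M *ᵥ c) i • v = c 0 • M i 0 • v + c 1 • M i 1 • v := by
    rw [mulVec, dotProduct, Fin.sum_univ_two, add_smul, smul_smul, smul_smul, mul_comm (c 0),
      mul_comm (c 1)]
  rw [fromBlocks_mulVec, Sum.elim_comp_inl, Sum.elim_comp_inr, mulVec_smul, mulVec_smul,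
    mulVec_smul, mulVec_smul, hA, hB, hC, hD, hrow, hrow]

variable [CommRing R] [IsDomain R]

theorem exists_mulVec_eq_smul_of_isRoot_charpoly [DecidableEq n] {M : Matrix n n R} {μ : R}
    (hμ : M.charpoly.IsRoot μ) : ∃ c : n → R, c ≠ 0 ∧ M *ᵥ c = μ • c := by
  rw [← charpoly_toLin', ← Module.End.hasEigenvalue_iff_isRoot_charpoly] at hμ
  obtain ⟨c, hc⟩ := hμ.exists_hasEigenvector
  exact ⟨c, hc.2, hc.apply_eq_smul⟩

theorem exists_fromBlocks_mulVec_eq_smul {A B C D : Matrix n n R} {v : n → R} (hv : v ≠ 0)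
    {M : Matrix (Fin 2) (Fin 2) R} (hA : A *ᵥ v = M 0 0 • v) (hB : B *ᵥ v = M 0 1 • v)
    (hC : C *ᵥ v = M 1 0 • v) (hD : D *ᵥ v = M 1 1 • v) {μ : R} (hμ : M.charpoly.IsRoot μ) :
    ∃ w : n ⊕ n → R, w ≠ 0 ∧ fromBlocks A B C D *ᵥ w = μ • w := by
  obtain ⟨c, hc, hMc⟩ := exists_mulVec_eq_smul_of_isRoot_charpoly hμ
  refine ⟨Sum.elim (c 0 • v) (c 1 • v), sumElim_smul_ne_zero hc hv, ?_⟩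
  rw [fromBlocks_mulVec_sumElim_smul hA hB hC hD, hMc]
  ext (i | i) <;> simp [mul_assoc]

end BlockEigenvectors

section Gram

variable {m n R : Type*} [Fintype m] [Fintype n] [DecidableEq n] [CommRing R]

theorem mul_transpose_eq_fromBlocks {S : Matrix n m R} {γ : R} {A : Matrix (n ⊕ n) (m ⊕ n) R}
    (hA : A = fromBlocks 0 (-1) S (γ • 1)) :
    A * Aᵀ = fromBlocks 1 (-γ • 1) (-γ • 1) (γ ^ 2 • 1 + S * Sᵀ) := by
  simp [hA, fromBlocks_transpose, fromBlocks_multiply, smul_smul, sq, add_comm]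

/-- The 2×2 matrix by which `A·Aᵀ`, for `A = [[0, −I], [S, γ·I]]`, acts on the span of `(v, 0)` and
`(0, v)` when `S·Sᵀ·v = κ²·v`. -/
def gramBlock (γ κ : R) : Matrix (Fin 2) (Fin 2) R :=
  !![1, -γ; -γ, γ ^ 2 + κ ^ 2]

open Polynomial in
theorem charpoly_gramBlock [Nontrivial R] (γ κ : R) :
    (gramBlock γ κ).charpoly = X ^ 2 - C (γ ^ 2 + κ ^ 2 + 1) * X + C (κ ^ 2) := by
  have htrace : (gramBlock γ κ).trace = γ ^ 2 + κ ^ 2 + 1 := by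
    rw [gramBlock, trace_fin_two_of, add_comm]
  have hdet : (gramBlock γ κ).det = κ ^ 2 := by
    rw [gramBlock, det_fin_two_of]
    ring
  rw [charpoly_fin_two, htrace, hdet]

theorem exists_mul_transpose_mulVec_eq_smul [IsDomain R] {S : Matrix n m R} {γ κ μ : R}
    {A : Matrix (n ⊕ n) (m ⊕ n) R} (hA : A = fromBlocks 0 (-1) S (γ • 1)) {v : n → R} (hv : v ≠ 0)
    (hSv : (S * Sᵀ) *ᵥ v = κ ^ 2 • v) (hμ : (gramBlock γ κ).charpoly.IsRoot μ) :
    ∃ w : n ⊕ n → R, w ≠ 0 ∧ (A * Aᵀ) *ᵥ w = μ • w := by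
  have hscalar (r : R) : (r • (1 : Matrix n n R)) *ᵥ v = r • v := by
    rw [smul_mulVec, one_mulVec]
  have hcorner : (γ ^ 2 • (1 : Matrix n n R) + S * Sᵀ) *ᵥ v = (γ ^ 2 + κ ^ 2) • v := by
    rw [add_mulVec, hscalar, hSv, add_smul]
  have hone : (1 : Matrix n n R) *ᵥ v = (1 : R) • v := by
    rw [one_mulVec, one_smul]
  rw [mul_transpose_eq_fromBlocks hA]
  exact exists_fromBlocks_mulVec_eq_smul hv hone (hscalar (-γ)) (hscalar (-γ)) hcorner hμ

end Gram

section Roots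

variable (γ κ : ℝ)

theorem discrim_charpoly_gramBlock_nonneg : 0 ≤ (γ ^ 2 + κ ^ 2 + 1) ^ 2 - 4 * κ ^ 2 :=
  calc
    0 ≤ (γ ^ 2 + κ ^ 2 - 1) ^ 2 + (2 * γ) ^ 2 := by positivity
    _ = (γ ^ 2 + κ ^ 2 + 1) ^ 2 - 4 * κ ^ 2 := by ring

theorem isRoot_charpoly_gramBlock_iff_eq_muPlus_or_eq_muMinus {μ : ℝ} :
    (gramBlock γ κ).charpoly.IsRoot μ ↔ μ = muPlus γ κ ∨ μ = muMinus γ κ := by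
  have hdiscrim : discrim 1 (-(γ ^ 2 + κ ^ 2 + 1)) (κ ^ 2) =
      √((γ ^ 2 + κ ^ 2 + 1) ^ 2 - 4 * κ ^ 2) * √((γ ^ 2 + κ ^ 2 + 1) ^ 2 - 4 * κ ^ 2) := by
    rw [Real.mul_self_sqrt (discrim_charpoly_gramBlock_nonneg γ κ), discrim, neg_sq, mul_one]
  have heval : (gramBlock γ κ).charpoly.eval μ =
      1 * (μ * μ) + -(γ ^ 2 + κ ^ 2 + 1) * μ + κ ^ 2 := by
    simp only [charpoly_gramBlock, Polynomial.eval_add, Polynomial.eval_sub, Polynomial.eval_mul,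
      Polynomial.eval_pow, Polynomial.eval_X, Polynomial.eval_C]
    ring
  rw [Polynomial.IsRoot, heval, quadratic_eq_zero_iff one_ne_zero hdiscrim, neg_neg, mul_one,
    muPlus, muMinus]

end Roots

theorem muPlusMinus_mem_eigenvalues_AAT_general {m n : Type*} [Fintype m] [Fintype n]
    [DecidableEq n] (S : Matrix n m ℝ) (γ : ℝ) (A : Matrix (n ⊕ n) (m ⊕ n) ℝ)
    (hA : A = fromBlocks 0 (-1) S (γ • 1)) (v : n → ℝ) (hv : v ≠ 0) (κ : ℝ)
    (hκ : (S * Sᵀ) *ᵥ v = κ ^ 2 • v) :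
    (∃ w : n ⊕ n → ℝ, w ≠ 0 ∧ (A * Aᵀ) *ᵥ w = muPlus γ κ • w) ∧
    (∃ w : n ⊕ n → ℝ, w ≠ 0 ∧ (A * Aᵀ) *ᵥ w = muMinus γ κ • w) := by
  have hroot {μ : ℝ} := (isRoot_charpoly_gramBlock_iff_eq_muPlus_or_eq_muMinus γ κ (μ := μ)).mpr
  exact ⟨exists_mul_transpose_mulVec_eq_smul hA hv hκ (hroot (.inl rfl)),
    exists_mul_transpose_mulVec_eq_smul hA hv hκ (hroot (.inr rfl))⟩

/-- If `v ≠ 0` is an eigenvector of the symmetric matrix `S` with eigenvalue `κ`, then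
both `μ₊(γ, κ)` and `μ₋(γ, κ)` are eigenvalues of `A·Aᵀ`, where
`A = [[0, −I], [S, γ·I]]`. -/
theorem muPlusMinus_mem_eigenvalues_AAT (d : ℕ) (hd : 1 ≤ d)
    (S : Matrix (Fin d) (Fin d) ℝ) (hS : S.IsSymm) (γ : ℝ)
    (A : Matrix (Fin d ⊕ Fin d) (Fin d ⊕ Fin d) ℝ)
    (hA : A = Matrix.fromBlocks 0 (-1) S (γ • 1))
    (v : Fin d → ℝ) (hv : v ≠ 0) (κ : ℝ) (hκ : S.mulVec v = κ • v) :
    (∃ w : Fin d ⊕ Fin d → ℝ, w ≠ 0 ∧ (A * Aᵀ).mulVec w = muPlus γ κ • w) ∧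
    (∃ w : Fin d ⊕ Fin d → ℝ, w ≠ 0 ∧ (A * Aᵀ).mulVec w = muMinus γ κ • w) :=
  muPlusMinus_mem_eigenvalues_AAT_general S γ A hA v hv κ <| by
    rw [hS.eq, ← mulVec_mulVec, hκ, mulVec_smul, hκ, smul_smul, sq]
end

section
/- Let d ≥ 1, let S be a real symmetric d×d matrix with eigenvalues κ₁, …, κ_d (listed with multiplicity, e.g. via the spectral theorem for symmetric matrices), let γ ∈ ℝ, and let A = [[0, −I], [S, γ·I]] be the corresponding 2d×2d block matrix. Then the spectrum of A·Aᵀ over ℝ equals the set { μ : ∃ i ∈ {1, …, d}, μ = μ₊(γ, κ_i) or μ = μ₋(γ, κ_i) }. -/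
open Matrix

/-!
In the block form `A * Aᴴ = [[1, -γ̄], [-γ, S * Sᴴ + |γ|²]]` three of the four blocks are scalar, so
Silvester's determinant formula turns singularity of `μ - A * Aᴴ` into singularity of
`(μ - 1) (μ - |γ|² - S * Sᴴ) - |γ|²`, an affine function of the Hermitian matrix `S * Sᴴ`. By
spectral mapping this happens exactly when `μ² - (|γ|² + κ² + 1) μ + κ² = 0` for some singular
value `κ` of `S`, and the roots of this quadratic are `μ₊` and `μ₋`.
-/

section BlockDeterminant

open scoped Polynomial

variable {n R : Type*} [Fintype n] [DecidableEq n] [CommRing R]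

theorem det_mul_det_fromBlocks_of_commute {A C : Matrix n n R} (h : Commute A C)
    (B D : Matrix n n R) :
    A.det * (fromBlocks A B C D).det = A.det * (A * D - C * B).det := by
  have elimination :
      fromBlocks 1 0 (-C) A * fromBlocks A B C D = fromBlocks A B 0 (A * D - C * B) := by
    simp [fromBlocks_multiply, h.eq, sub_eq_neg_add]
  simpa [det_fromBlocks_zero₁₂, det_fromBlocks_zero₂₁] using congrArg det elimination

theorem det_fromBlocks_of_commute {A C : Matrix n n R} (h : Commute A C) (B D : Matrix n n R) :
    (fromBlocks A B C D).det = (A * D - C * B).det := by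
  -- `det A` need not be cancellable, but `det (X + A)` is, being monic; then set `X = 0`.
  let ι : Matrix n n R →+* Matrix n n R[X] := Polynomial.C.mapMatrix
  let ε : R[X] →+* R := Polynomial.evalRingHom 0
  have ε_ι (M : Matrix n n R) : ε.mapMatrix (ι M) = M := by ext; simp [ε, ι]
  have ε_charmatrix : ε.mapMatrix (charmatrix (-A)) = A := by
    ext i j
    rcases eq_or_ne i j with rfl | hij <;> simp [ε, *]
  have ε_fromBlocks : ε.mapMatrix (fromBlocks (charmatrix (-A)) (ι B) (ι C) (ι D)) =
      fromBlocks A B C D := by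
    rw [RingHom.mapMatrix_apply, fromBlocks_map]
    simp only [← RingHom.mapMatrix_apply, ε_ι, ε_charmatrix]
  have commute_charmatrix : Commute (charmatrix (-A)) (ι C) := by
    rw [charmatrix, map_neg, sub_neg_eq_add]
    exact (scalar_commute _ (.all _) _).add_left (h.map ι)
  have det_charmatrix : (fromBlocks (charmatrix (-A)) (ι B) (ι C) (ι D)).det =
      (charmatrix (-A) * ι D - ι C * ι B).det :=
    (charpoly_monic (-A)).isRegular.left
      (det_mul_det_fromBlocks_of_commute commute_charmatrix _ _)
  simpa only [RingHom.map_det, ε_fromBlocks, map_sub, map_mul, ε_ι, ε_charmatrix]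
    using congrArg ε det_charmatrix

theorem isUnit_fromBlocks_iff_of_commute {A C : Matrix n n R} (h : Commute A C)
    (B D : Matrix n n R) : IsUnit (fromBlocks A B C D) ↔ IsUnit (A * D - C * B) := by
  rw [isUnit_iff_isUnit_det, det_fromBlocks_of_commute h, ← isUnit_iff_isUnit_det]

end BlockDeterminant

section SpectralMapping

open Polynomial

theorem spectrum_aeval_eq_image {R A : Type*} {P : A → Prop} [CommSemiring R] [StarRing R]
    [MetricSpace R] [IsTopologicalSemiring R] [ContinuousStar R] [TopologicalSpace A] [Ring A]
    [StarRing A] [Algebra R A] [ContinuousFunctionalCalculus R A P] {a : A} (ha : P a)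
    (p : R[X]) : spectrum R (aeval a p) = p.eval '' spectrum R a := by
  rw [← cfc_polynomial p a ha, cfc_map_spectrum ..]

theorem spectrum_mul_conjTranspose_self_eq_range {n 𝕜 : Type*} [Fintype n]
    [DecidableEq n] [RCLike 𝕜] {S : Matrix n n 𝕜} (hS : S.IsHermitian) :
    spectrum ℝ (S * Sᴴ) = Set.range fun i => hS.eigenvalues i ^ 2 := by
  have aeval_sq : aeval S (X ^ 2 : ℝ[X]) = S * Sᴴ := by rw [hS.eq, map_pow, aeval_X, pow_two]
  rw [← aeval_sq, spectrum_aeval_eq_image hS.isSelfAdjoint,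
    hS.spectrum_real_eq_range_eigenvalues, ← Set.range_comp]
  simp [Function.comp_def]

end SpectralMapping

section Quadratic

theorem sq_sub_four_mul_sq_nonneg (γ κ : ℝ) : 0 ≤ (γ ^ 2 + κ ^ 2 + 1) ^ 2 - 4 * κ ^ 2 :=
  calc
    0 ≤ (γ ^ 2 + (κ - 1) ^ 2) * (γ ^ 2 + (κ + 1) ^ 2) := by positivity
    _ = (γ ^ 2 + κ ^ 2 + 1) ^ 2 - 4 * κ ^ 2 := by ring

theorem sub_muPlus_mul_sub_muMinus (γ κ μ : ℝ) :
    (μ - muPlus γ κ) * (μ - muMinus γ κ) = μ ^ 2 - (γ ^ 2 + κ ^ 2 + 1) * μ + κ ^ 2 := by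
  unfold muPlus muMinus
  linear_combination (-1 / 4) * Real.sq_sqrt (sq_sub_four_mul_sq_nonneg γ κ)

theorem quadratic_eq_zero_iff_eq_muPlus_or_eq_muMinus (γ κ μ : ℝ) :
    μ ^ 2 - (γ ^ 2 + κ ^ 2 + 1) * μ + κ ^ 2 = 0 ↔ μ = muPlus γ κ ∨ μ = muMinus γ κ := by
  rw [← sub_muPlus_mul_sub_muMinus, mul_eq_zero, sub_eq_zero, sub_eq_zero]

end Quadratic

section MomentumDrift

/-- The drift matrix `[[0, -I], [S, γ I]]` of momentum dynamics with curvature matrix `S` and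
friction `γ`. -/
def momentumDrift {n R : Type*} [DecidableEq n] [Ring R] (S : Matrix n n R) (γ : R) :
    Matrix (n ⊕ n) (n ⊕ n) R :=
  fromBlocks 0 (-1) S (γ • 1)

variable {n : Type*} [Fintype n] [DecidableEq n]

theorem momentumDrift_mul_conjTranspose {R : Type*} [CommRing R] [StarRing R]
    (S : Matrix n n R) (γ : R) :
    momentumDrift S γ * (momentumDrift S γ)ᴴ =
      fromBlocks 1 (-(star γ • 1)) (-(γ • 1)) (S * Sᴴ + (star γ * γ) • 1) := by
  simp [momentumDrift, fromBlocks_conjTranspose, fromBlocks_multiply, smul_smul]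

variable {𝕜 : Type*} [RCLike 𝕜]

theorem isUnit_algebraMap_sub_momentumDrift_mul_conjTranspose_iff
    (S : Matrix n n 𝕜) (γ : 𝕜) (μ : ℝ) :
    IsUnit (algebraMap ℝ _ μ - momentumDrift S γ * (momentumDrift S γ)ᴴ) ↔
      IsUnit ((μ - 1) • ((μ - ‖γ‖ ^ 2) • 1 - S * Sᴴ) - ‖γ‖ ^ 2 • (1 : Matrix n n 𝕜)) := by
  have star_mul_self_smul : (star γ * γ) • (1 : Matrix n n 𝕜) = ‖γ‖ ^ 2 • 1 := by
    rw [RCLike.star_def, RCLike.conj_mul, ← RCLike.ofReal_pow,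
      RCLike.real_smul_eq_coe_smul (K := 𝕜)]
  have blocks : algebraMap ℝ _ μ - momentumDrift S γ * (momentumDrift S γ)ᴴ =
      fromBlocks ((μ - 1) • 1) (star γ • 1) (γ • 1) ((μ - ‖γ‖ ^ 2) • 1 - S * Sᴴ) := by
    rw [momentumDrift_mul_conjTranspose, star_mul_self_smul, Algebra.algebraMap_eq_smul_one,
      ← fromBlocks_one, fromBlocks_smul, sub_eq_add_neg, fromBlocks_neg, fromBlocks_add]
    congr 1
    all_goals module
  have scalar_commute_scalar : Commute ((μ - 1) • (1 : Matrix n n 𝕜)) (γ • 1) :=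
    .smul_left (.one_left _) _
  rw [blocks, isUnit_fromBlocks_iff_of_commute scalar_commute_scalar, smul_one_mul,
    smul_mul_smul_comm, mul_one, mul_comm γ, star_mul_self_smul]

open Polynomial in
theorem mem_spectrum_momentumDrift_mul_conjTranspose_iff (S : Matrix n n 𝕜) (γ : 𝕜) (μ : ℝ) :
    μ ∈ spectrum ℝ (momentumDrift S γ * (momentumDrift S γ)ᴴ) ↔
      ∃ σ ∈ spectrum ℝ (S * Sᴴ), μ ^ 2 - (‖γ‖ ^ 2 + σ + 1) * μ + σ = 0 := by
  let p : ℝ[X] := (μ - 1) • ((μ - ‖γ‖ ^ 2) • 1 - X) - ‖γ‖ ^ 2 • 1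
  have aeval_p : aeval (S * Sᴴ) p =
      (μ - 1) • ((μ - ‖γ‖ ^ 2) • 1 - S * Sᴴ) - ‖γ‖ ^ 2 • (1 : Matrix n n 𝕜) := by
    simp only [p, map_sub, map_smul, map_one, aeval_X]
  have eval_p (σ : ℝ) : p.eval σ = μ ^ 2 - (‖γ‖ ^ 2 + σ + 1) * μ + σ := by
    simp only [p, eval_sub, eval_smul, eval_one, eval_X, smul_eq_mul]
    ring
  rw [spectrum.mem_iff, isUnit_algebraMap_sub_momentumDrift_mul_conjTranspose_iff, ← aeval_p,
    ← spectrum.zero_mem_iff ℝ,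
    spectrum_aeval_eq_image (isHermitian_mul_conjTranspose_self S).isSelfAdjoint]
  simp only [Set.mem_image, eval_p]

/-- The numbers `κ i` are, up to sign and multiplicity, the singular values of `S`. -/
theorem spectrum_AAT_eq_general {ι : Type*} {S : Matrix n n 𝕜} {κ : ι → ℝ}
    (hκ : spectrum ℝ (S * Sᴴ) = Set.range fun i => κ i ^ 2) (γ : 𝕜) :
    spectrum ℝ (momentumDrift S γ * (momentumDrift S γ)ᴴ) =
      {μ : ℝ | ∃ i, μ = muPlus ‖γ‖ (κ i) ∨ μ = muMinus ‖γ‖ (κ i)} := by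
  ext μ
  rw [mem_spectrum_momentumDrift_mul_conjTranspose_iff, hκ, Set.exists_range_iff]
  simp only [quadratic_eq_zero_iff_eq_muPlus_or_eq_muMinus, Set.mem_ofPred_eq]

end MomentumDrift

/-- Let `S` be a real symmetric `d×d` matrix with eigenvalues `κ₁, …, κ_d` (with
multiplicity, via the spectral theorem), and let `A = [[0, −I], [S, γ·I]]`. Then the
spectrum of `A·Aᵀ` over `ℝ` is exactly `{ μ₊(γ, κᵢ), μ₋(γ, κᵢ) : 1 ≤ i ≤ d }`. -/
theorem spectrum_AAT_eq (d : ℕ) (hd : 1 ≤ d)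
    (S : Matrix (Fin d) (Fin d) ℝ) (hS : S.IsHermitian) (γ : ℝ)
    (A : Matrix (Fin d ⊕ Fin d) (Fin d ⊕ Fin d) ℝ)
    (hA : A = Matrix.fromBlocks 0 (-1) S (γ • 1)) :
    spectrum ℝ (A * Aᵀ)
      = {μ : ℝ | ∃ i : Fin d, μ = muPlus γ (hS.eigenvalues i)
          ∨ μ = muMinus γ (hS.eigenvalues i)} := by
  subst hA
  simpa [momentumDrift, muPlus, muMinus] using
    spectrum_AAT_eq_general (spectrum_mul_conjTranspose_self_eq_range hS) γ
end

section
/- Let d ≥ 1, let S be a real symmetric positive definite d×d matrix, let γ > 0, and let A = [[0, −I], [S, γ·I]] be the corresponding 2d×2d block matrix. Then the smallest eigenvalue of the (symmetric positive semidefinite) matrix A·Aᵀ is at most the square of the smallest eigenvalue of S. Equivalently, the smallest singular value σ_min of A satisfies σ_min ≤ θ_min, where θ_min is the smallest singular value of S. -/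
open Matrix

/-!
Left multiplication by the block row `V = [γ·I, I]` cancels the second block column of
`A = [[0, −I], [S, γ·I]]`, that is `V·A = [S, 0]`, while `V·Vᴴ = (1 + |γ|²)·I`. Compressing
`A·Aᴴ ≥ λ·I` by `V` therefore gives `S·Sᴴ ≥ (1 + |γ|²)·λ·I`.
-/

section SmallestEigenvalue

open scoped ComplexOrder MatrixOrder

variable {𝕜 m n p : Type*} [RCLike 𝕜] [Fintype n] [DecidableEq n]

theorem posSemidef_sub_smul_one_iff {M : Matrix n n 𝕜} (hM : M.IsHermitian) {c : ℝ} :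
    (M - c • 1).PosSemidef ↔ ∀ i, c ≤ hM.eigenvalues i := by
  rw [← Matrix.le_iff, ← Algebra.algebraMap_eq_smul_one,
    algebraMap_le_iff_le_spectrum (ha := hM.isSelfAdjoint),
    hM.spectrum_real_eq_range_eigenvalues, Set.forall_mem_range]

theorem iInf_eigenvalues_le_of_mem_spectrum {M : Matrix n n 𝕜} (hM : M.IsHermitian) {μ : ℝ}
    (hμ : μ ∈ spectrum ℝ M) : ⨅ i, hM.eigenvalues i ≤ μ := by
  rw [hM.spectrum_real_eq_range_eigenvalues] at hμ
  exact csInf_le (Set.finite_range _).bddBelow hμ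

theorem mul_iInf_eigenvalues_le_of_mul_conjTranspose_self [Fintype m] [DecidableEq m] [Nonempty m]
    {M : Matrix n n 𝕜} (hM : M.IsHermitian) {V : Matrix m n 𝕜}
    (hN : (V * M * Vᴴ).IsHermitian) {c : ℝ} (hV : V * Vᴴ = c • 1) :
    c * ⨅ i, hM.eigenvalues i ≤ ⨅ i, hN.eigenvalues i := by
  set μ := ⨅ i, hM.eigenvalues i
  have hMμ : (M - μ • 1).PosSemidef :=
    (posSemidef_sub_smul_one_iff hM).2 (ciInf_le (Set.finite_range _).bddBelow)
  have compress : V * (M - μ • 1) * Vᴴ = V * M * Vᴴ - (c * μ) • 1 := by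
    rw [Matrix.mul_sub, Matrix.sub_mul, Matrix.mul_smul, Matrix.mul_one, Matrix.smul_mul, hV,
      smul_smul, mul_comm μ]
  have hNμ : (V * M * Vᴴ - (c * μ) • 1).PosSemidef :=
    compress ▸ hMμ.mul_mul_conjTranspose_same V
  exact le_ciInf ((posSemidef_sub_smul_one_iff hN).1 hNμ)

theorem iInf_eigenvalues_mul_conjTranspose_self_le_sq {S : Matrix n n 𝕜} (hS : S.IsHermitian)
    (i : n) :
    ⨅ j, (isHermitian_mul_conjTranspose_self S).eigenvalues j ≤ hS.eigenvalues i ^ 2 := by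
  apply iInf_eigenvalues_le_of_mem_spectrum
  rw [hS.eq, ← sq]
  exact spectrum.pow_mem_pow S 2 (hS.eigenvalues_mem_spectrum_real i)

/-- The block matrix `[[0, −I], [S, γ·I]]` that drives gradient descent with momentum on a quadratic
loss with Hessian `S` and friction `γ`. Only the rows of `S` are tied to the size of the identity
blocks, so `S` may be rectangular. -/
def momentumMatrix (γ : 𝕜) (S : Matrix n p 𝕜) : Matrix (n ⊕ n) (p ⊕ n) 𝕜 :=
  fromBlocks 0 (-1) S (γ • 1)

/-- The block row `[γ·I, I]`, whose product with the second block column of `momentumMatrix γ S`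
vanishes. -/
def momentumRow (n : Type*) [DecidableEq n] (γ : 𝕜) : Matrix n (n ⊕ n) 𝕜 :=
  fromCols (γ • 1) 1

theorem momentumRow_mul_momentumMatrix (γ : 𝕜) (S : Matrix n p 𝕜) :
    momentumRow n γ * momentumMatrix γ S = fromCols S 0 := by
  simp [momentumRow, momentumMatrix, fromCols_mul_fromBlocks]

theorem momentumRow_mul_conjTranspose_self (γ : 𝕜) :
    momentumRow n γ * (momentumRow n γ)ᴴ = (1 + ‖γ‖ ^ 2) • (1 : Matrix n n 𝕜) := by
  rw [RCLike.real_smul_eq_coe_smul (K := 𝕜)]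
  simp [momentumRow, conjTranspose_fromCols_eq_fromRows_conjTranspose, fromCols_mul_fromRows,
    smul_smul, RCLike.conj_mul, add_smul, add_comm]

theorem momentumRow_mul_gram_mul_conjTranspose [Fintype p] (γ : 𝕜) (S : Matrix n p 𝕜) :
    momentumRow n γ * (momentumMatrix γ S * (momentumMatrix γ S)ᴴ) * (momentumRow n γ)ᴴ =
      S * Sᴴ := by
  calc momentumRow n γ * (momentumMatrix γ S * (momentumMatrix γ S)ᴴ) * (momentumRow n γ)ᴴ
      = momentumRow n γ * momentumMatrix γ S * (momentumRow n γ * momentumMatrix γ S)ᴴ := by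
        simp only [conjTranspose_mul, Matrix.mul_assoc]
    _ = S * Sᴴ := by
        rw [momentumRow_mul_momentumMatrix, conjTranspose_fromCols_eq_fromRows_conjTranspose,
          fromCols_mul_fromRows, Matrix.zero_mul, add_zero]

theorem iInf_eigenvalues_momentumMatrix_mul_conjTranspose_self_le [Nonempty n] [Fintype p] (γ : 𝕜)
    (S : Matrix n p 𝕜) :
    ⨅ i, (isHermitian_mul_conjTranspose_self (momentumMatrix γ S)).eigenvalues i ≤
      (⨅ i, (isHermitian_mul_conjTranspose_self S).eigenvalues i) / (1 + ‖γ‖ ^ 2) := by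
  rw [le_div_iff₀' (by positivity)]
  simp only [← momentumRow_mul_gram_mul_conjTranspose γ S]
  exact mul_iInf_eigenvalues_le_of_mul_conjTranspose_self _ _
    (momentumRow_mul_conjTranspose_self γ)

theorem smallest_eigenvalue_AAT_le_general (γ : 𝕜) {S : Matrix n n 𝕜} (hS : S.IsHermitian) (i : n) :
    ⨅ j, (isHermitian_mul_conjTranspose_self (momentumMatrix γ S)).eigenvalues j ≤
      hS.eigenvalues i ^ 2 / (1 + ‖γ‖ ^ 2) := by
  have : Nonempty n := ⟨i⟩
  grw [iInf_eigenvalues_momentumMatrix_mul_conjTranspose_self_le,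
    iInf_eigenvalues_mul_conjTranspose_self_le_sq hS i]

end SmallestEigenvalue

/-- For a symmetric positive definite `S` and `γ > 0`, the smallest eigenvalue of
`A·Aᵀ`, where `A = [[0, −I], [S, γ·I]]`, is at most the square of the smallest
eigenvalue of `S`; equivalently `σ_min(A) ≤ θ_min(S)`. -/
theorem smallest_eigenvalue_AAT_le (d : ℕ) (hd : 1 ≤ d) (γ : ℝ) (hγ : 0 < γ)
    (S : Matrix (Fin d) (Fin d) ℝ) (hS : S.PosDef)
    (A : Matrix (Fin d ⊕ Fin d) (Fin d ⊕ Fin d) ℝ)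
    (hA : A = Matrix.fromBlocks 0 (-1) S (γ • 1))
    (hAAT : (A * Aᵀ).IsHermitian) :
    (⨅ i, hAAT.eigenvalues i) ≤ (⨅ i, hS.1.eigenvalues i) ^ 2 := by
  have : Nonempty (Fin d) := ⟨⟨0, hd⟩⟩
  obtain ⟨i, hi⟩ := exists_eq_ciInf_of_finite (f := hS.1.eigenvalues)
  subst hA
  exact hi ▸ (smallest_eigenvalue_AAT_le_general γ hS.1 i).trans
    (div_le_self (sq_nonneg _) (le_add_of_nonneg_right (sq_nonneg _)))
end

section
/- Let κ > 0 be fixed. The function g : (0, ∞) → ℝ defined by g(γ) = (γ² + κ² + 1 − √((γ² + κ² + 1)² − 4κ²))/2 is strictly decreasing on (0, ∞); that is, for all 0 < γ₁ < γ₂ one has g(γ₂) < g(γ₁). -/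
/-!
For fixed `κ`, `g(γ)` is the smaller root of `x² - s x + κ²`, where `s = γ² + κ² + 1`. The product
of the two roots is `κ²`, so the smaller root decreases as the larger one, which is visibly an
increasing function of `s`, increases.
-/

/-- The smaller root of `x ^ 2 - s * x + p`, i.e. the smaller eigenvalue of a real symmetric
`2 × 2` matrix with trace `s` and determinant `p`. It is a root only if `4 * p ≤ s ^ 2`;
otherwise the square root is `0` and the value is `s / 2`. -/
noncomputable def smallerRoot (s p : ℝ) : ℝ :=
  (s - √(s ^ 2 - 4 * p)) / 2

/-- The larger root of `x ^ 2 - s * x + p`, with the same convention as `smallerRoot` when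
`s ^ 2 < 4 * p`. -/
noncomputable def largerRoot (s p : ℝ) : ℝ :=
  (s + √(s ^ 2 - 4 * p)) / 2

theorem smallerRoot_mul_largerRoot {s p : ℝ} (h : 4 * p ≤ s ^ 2) :
    smallerRoot s p * largerRoot s p = p := by
  have hsqrt : √(s ^ 2 - 4 * p) ^ 2 = s ^ 2 - 4 * p := Real.sq_sqrt (sub_nonneg.2 h)
  unfold smallerRoot largerRoot
  linear_combination -hsqrt / 4

theorem largerRoot_pos {s : ℝ} (p : ℝ) (hs : 0 < s) : 0 < largerRoot s p := by
  unfold largerRoot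
  positivity

theorem strictMonoOn_largerRoot (p : ℝ) : StrictMonoOn (largerRoot · p) (Set.Ici 0) := by
  intro s (hs : 0 ≤ s) t _ hst
  have hsqrt : √(s ^ 2 - 4 * p) ≤ √(t ^ 2 - 4 * p) := by gcongr
  simp only [largerRoot]
  linarith

theorem strictAntiOn_smallerRoot {p : ℝ} (hp : 0 < p) :
    StrictAntiOn (smallerRoot · p) (Set.Ici (2 * √p)) := by
  have pos_of_mem {s : ℝ} (hs : 2 * √p ≤ s) : 0 < s := by
    have : 0 < √p := Real.sqrt_pos.2 hp
    linarith
  have eq_div {s : ℝ} (hs : 2 * √p ≤ s) : smallerRoot s p = p / largerRoot s p := by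
    have hdisc : 4 * p ≤ s ^ 2 :=
      calc 4 * p = (2 * √p) ^ 2 := by rw [mul_pow, Real.sq_sqrt hp.le]; norm_num
        _ ≤ s ^ 2 := by gcongr
    exact eq_div_of_mul_eq (largerRoot_pos p (pos_of_mem hs)).ne' (smallerRoot_mul_largerRoot hdisc)
  intro s hs t ht hst
  calc smallerRoot t p = p / largerRoot t p := eq_div ht
    _ < p / largerRoot s p :=
      div_lt_div_of_pos_left hp (largerRoot_pos p (pos_of_mem hs))
        (strictMonoOn_largerRoot p (pos_of_mem hs).le (pos_of_mem ht).le hst)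
    _ = smallerRoot s p := (eq_div hs).symm

theorem strictAntiOn_muMinus_in_gamma_general {κ : ℝ} (hκ : κ ≠ 0) :
    StrictAntiOn
      (fun γ : ℝ => (γ ^ 2 + κ ^ 2 + 1 - √((γ ^ 2 + κ ^ 2 + 1) ^ 2 - 4 * κ ^ 2)) / 2)
      (Set.Ici 0) := by
  have trace_strictMonoOn : StrictMonoOn (fun γ : ℝ => γ ^ 2 + κ ^ 2 + 1) (Set.Ici 0) := by
    intro γ₁ (hγ₁ : 0 ≤ γ₁) γ₂ _ hlt
    dsimp only
    gcongr
  have trace_mem : Set.MapsTo (fun γ : ℝ => γ ^ 2 + κ ^ 2 + 1) (Set.Ici 0)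
      (Set.Ici (2 * √(κ ^ 2))) := by
    intro γ _
    rw [Set.mem_Ici, Real.sqrt_sq_eq_abs]
    linarith [two_mul_le_add_sq |κ| 1, sq_abs κ, sq_nonneg γ]
  exact (strictAntiOn_smallerRoot (sq_pos_of_ne_zero hκ)).comp_strictMonoOn
    trace_strictMonoOn trace_mem

/-- For fixed `κ > 0`, the function
`g(γ) = (γ² + κ² + 1 − √((γ² + κ² + 1)² − 4κ²))/2` is strictly decreasing on `(0, ∞)`. -/
theorem strictAntiOn_muMinus_in_gamma (κ : ℝ) (hκ : 0 < κ) :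
    StrictAntiOn
      (fun γ : ℝ =>
        (γ ^ 2 + κ ^ 2 + 1 - Real.sqrt ((γ ^ 2 + κ ^ 2 + 1) ^ 2 - 4 * κ ^ 2)) / 2)
      (Set.Ioi 0) :=
  (strictAntiOn_muMinus_in_gamma_general hκ.ne').mono Set.Ioi_subset_Ici_self
end
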